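/- arXiv:0705.3357 — 5 statements merged into one kernel-verified Lean document; each statement's English description precedes it below -/
import Mathlib

section
/- For all y, η with 0 < y < 1, 0 < η < 1 and every ζ ∈ ℝ with ζ ≠ 0, the function L_{(η,y)}(x) = ln[(x² + (y−η)²)/(x² + (y+η)²)] satisfies (1/√(2π)) ∫_ℝ L_{(η,y)}(x) e^{-i x ζ} dx = √(2π) · (1/|ζ|) · [e^{-(y+η)|ζ|} − e^{-|y−η| |ζ|}]. -/
open MeasureTheory

/-!
For `t > 0`, differentiating `log (x² + t²)` in `t` gives `2 t / (x² + t²)`, which is `2π` times the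
Poisson kernel `P_t(x)` of the upper half-plane. Hence `log ((x² + a²) / (x² + b²))` is
`2π ∫_b^a P_t(x) dt`, and by Fubini its Fourier transform is the integral over `t` of the Fourier
transforms of the Poisson kernels. These are decaying exponentials in the frequency: `P_t` is the
Fourier transform of `exp (-2πt|x|)`, so Fourier inversion applies.
-/

open Complex (I)
open ProbabilityTheory (cauchyPDFReal)
open scoped FourierTransform Real

theorem fourier_intervalIntegral {V E : Type*} [NormedAddCommGroup V] [InnerProductSpace ℝ V]
    [FiniteDimensional ℝ V] [MeasurableSpace V] [BorelSpace V] [NormedAddCommGroup E]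
    [NormedSpace ℂ E] {a b : ℝ} {f : ℝ → V → E}
    (hf : Integrable (Function.uncurry f) ((volume.restrict (Set.uIoc a b)).prod volume)) (w : V) :
    𝓕 (fun v ↦ ∫ t in a..b, f t v) w = ∫ t in a..b, 𝓕 (f t) w := by
  have hchar : Continuous fun p : ℝ × V ↦ (Real.fourierChar (-inner ℝ p.2 w) : ℂ) := by fun_prop
  have hf_int : Integrable (Function.uncurry fun t v ↦ Real.fourierChar (-inner ℝ v w) • f t v)
      ((volume.restrict (Set.uIoc a b)).prod volume) :=
    (integrable_norm_iff (hchar.aestronglyMeasurable.smul hf.1)).1 <|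
      hf.norm.congr <| .of_forall fun p ↦ (Circle.norm_smul _ _).symm
  simp only [Real.fourier_eq]
  rw [intervalIntegral_integral_swap hf_int]
  simp only [Circle.smul_def, intervalIntegral.integral_smul]

theorem fourier_div_two_pi_eq_integral (f : ℝ → ℂ) (ζ : ℝ) :
    𝓕 f (ζ / (2 * π)) = ∫ x : ℝ, f x * Complex.exp (-(I * x * ζ)) := by
  rw [Real.fourier_real_eq_integral_exp_smul]
  congr 1 with x
  have hphase : -2 * π * x * (ζ / (2 * π)) = -(x * ζ) := by field
  rw [hphase, smul_eq_mul, mul_comm]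
  push_cast
  ring_nf

section TwoSidedExponential

variable (s c : ℂ)

theorem eqOn_Iic_cexp_mul_sub_mul_abs :
    Set.EqOn (fun x : ℝ ↦ Complex.exp ((s + c) * x)) (fun x ↦ Complex.exp (c * x - s * |x|))
      (Set.Iic 0) := by
  intro x hx
  simp only [abs_of_nonpos (Set.mem_Iic.1 hx)]
  push_cast
  ring_nf

theorem eqOn_Ioi_cexp_mul_sub_mul_abs :
    Set.EqOn (fun x : ℝ ↦ Complex.exp ((c - s) * x)) (fun x ↦ Complex.exp (c * x - s * |x|))
      (Set.Ioi 0) := by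
  intro x hx
  simp only [abs_of_pos (Set.mem_Ioi.1 hx)]
  ring_nf

variable {s c}

theorem re_add_pos_of_abs_re_lt (h : |c.re| < s.re) : 0 < (s + c).re := by
  rw [Complex.add_re]
  linarith [neg_le_abs c.re]

theorem re_sub_neg_of_abs_re_lt (h : |c.re| < s.re) : (c - s).re < 0 := by
  rw [Complex.sub_re]
  linarith [le_abs_self c.re]

theorem integrableOn_Iic_cexp_mul_sub_mul_abs (h : |c.re| < s.re) :
    IntegrableOn (fun x : ℝ ↦ Complex.exp (c * x - s * |x|)) (Set.Iic 0) :=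
  (integrableOn_exp_mul_complex_Iic (re_add_pos_of_abs_re_lt h) 0).congr_fun
    (eqOn_Iic_cexp_mul_sub_mul_abs s c) measurableSet_Iic

theorem integrableOn_Ioi_cexp_mul_sub_mul_abs (h : |c.re| < s.re) :
    IntegrableOn (fun x : ℝ ↦ Complex.exp (c * x - s * |x|)) (Set.Ioi 0) :=
  (integrableOn_exp_mul_complex_Ioi (re_sub_neg_of_abs_re_lt h) 0).congr_fun
    (eqOn_Ioi_cexp_mul_sub_mul_abs s c) measurableSet_Ioi

theorem integrable_cexp_mul_sub_mul_abs (h : |c.re| < s.re) :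
    Integrable fun x : ℝ ↦ Complex.exp (c * x - s * |x|) := by
  rw [← integrableOn_univ, ← Set.Iic_union_Ioi (a := (0 : ℝ))]
  exact (integrableOn_Iic_cexp_mul_sub_mul_abs h).union (integrableOn_Ioi_cexp_mul_sub_mul_abs h)

theorem integral_cexp_mul_sub_mul_abs (h : |c.re| < s.re) :
    ∫ x : ℝ, Complex.exp (c * x - s * |x|) = 2 * s / (s ^ 2 - c ^ 2) := by
  have hadd := re_add_pos_of_abs_re_lt h
  have hsub := re_sub_neg_of_abs_re_lt h
  have hadd_ne : s + c ≠ 0 := fun h0 ↦ hadd.ne' (by simp [h0])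
  have hsub_ne : c - s ≠ 0 := fun h0 ↦ hsub.ne (by simp [h0])
  have hprod_ne : s ^ 2 - c ^ 2 ≠ 0 := by
    rw [show s ^ 2 - c ^ 2 = -((s + c) * (c - s)) by ring]
    exact neg_ne_zero.2 (mul_ne_zero hadd_ne hsub_ne)
  calc ∫ x : ℝ, Complex.exp (c * x - s * |x|)
    _ = (∫ x : ℝ in Set.Iic 0, Complex.exp ((s + c) * x)) +
        ∫ x : ℝ in Set.Ioi 0, Complex.exp ((c - s) * x) := by
      rw [setIntegral_congr_fun measurableSet_Iic (eqOn_Iic_cexp_mul_sub_mul_abs s c),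
        setIntegral_congr_fun measurableSet_Ioi (eqOn_Ioi_cexp_mul_sub_mul_abs s c)]
      exact (intervalIntegral.integral_Iic_add_Ioi (integrableOn_Iic_cexp_mul_sub_mul_abs h)
        (integrableOn_Ioi_cexp_mul_sub_mul_abs h)).symm
    _ = 1 / (s + c) + -1 / (c - s) := by
      rw [integral_exp_mul_complex_Iic hadd, integral_exp_mul_complex_Ioi hsub]
      simp only [Complex.ofReal_zero, mul_zero, Complex.exp_zero]
    _ = 2 * s / (s ^ 2 - c ^ 2) := by
      field_simp
      ring

end TwoSidedExponential

theorem integrable_exp_neg_mul_abs {r : ℝ} (hr : 0 < r) :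
    Integrable fun x : ℝ ↦ (Real.exp (-(r * |x|)) : ℂ) := by
  have hre : |(0 : ℂ).re| < (r : ℂ).re := by simpa using hr
  simpa using integrable_cexp_mul_sub_mul_abs hre

/-- The Poisson kernel `P_t(x) = t / (π (x² + t²))` of the upper half-plane. For `t > 0` it is the
density of the centred Cauchy distribution of scale `t`; the scale is a real number here so that
the kernel can be integrated and differentiated in it. -/
noncomputable def halfPlanePoissonKernel (t x : ℝ) : ℝ := t / (π * (x ^ 2 + t ^ 2))

theorem norm_halfPlanePoissonKernel (t x : ℝ) :
    ‖halfPlanePoissonKernel t x‖ = cauchyPDFReal 0 ‖t‖₊ x := by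
  have hden : 0 ≤ π * (x ^ 2 + t ^ 2) := by positivity
  rw [halfPlanePoissonKernel, norm_div, Real.norm_of_nonneg hden,
    ProbabilityTheory.cauchyPDFReal_def, coe_nnnorm, sub_zero, Real.norm_eq_abs, sq_abs,
    div_eq_mul_inv, mul_inv]
  ring

theorem measurable_uncurry_halfPlanePoissonKernel :
    Measurable (Function.uncurry halfPlanePoissonKernel) := by
  simp only [Function.uncurry_def, halfPlanePoissonKernel]
  fun_prop

theorem integrable_halfPlanePoissonKernel (t : ℝ) : Integrable (halfPlanePoissonKernel t) := by
  refine (integrable_norm_iff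
    measurable_uncurry_halfPlanePoissonKernel.of_uncurry_left.aestronglyMeasurable).1 ?_
  simp only [norm_halfPlanePoissonKernel]
  exact ProbabilityTheory.integrable_cauchyPDFReal 0

theorem integral_norm_halfPlanePoissonKernel {t : ℝ} (ht : t ≠ 0) :
    ∫ x, ‖halfPlanePoissonKernel t x‖ = 1 := by
  simp only [norm_halfPlanePoissonKernel]
  exact ProbabilityTheory.integral_cauchyPDFReal_eq_one 0 (nnnorm_ne_zero_iff.2 ht)

theorem integrable_uncurry_halfPlanePoissonKernel {s : Set ℝ} (hs : volume s ≠ ⊤) :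
    Integrable (Function.uncurry halfPlanePoissonKernel) ((volume.restrict s).prod volume) := by
  refine (integrable_prod_iff
    measurable_uncurry_halfPlanePoissonKernel.aestronglyMeasurable).2
    ⟨.of_forall integrable_halfPlanePoissonKernel, ?_⟩
  have hconst : IntegrableOn (fun _ : ℝ ↦ (1 : ℝ)) s := integrableOn_const hs
  refine hconst.congr ?_
  filter_upwards [ae_restrict_of_ae (Measure.ae_ne volume (0 : ℝ))] with t ht
  exact (integral_norm_halfPlanePoissonKernel ht).symm

theorem fourier_exp_neg_two_pi_mul_abs {t : ℝ} (ht : 0 < t) :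
    𝓕 (fun x : ℝ ↦ (Real.exp (-(2 * π * t * |x|)) : ℂ)) =
      fun w ↦ (halfPlanePoissonKernel t w : ℂ) := by
  ext w
  have hre : |(-(2 * π * w * I)).re| < (2 * π * t : ℂ).re := by
    simpa using! (by positivity : 0 < 2 * π * t)
  calc 𝓕 (fun x : ℝ ↦ (Real.exp (-(2 * π * t * |x|)) : ℂ)) w
    _ = ∫ x : ℝ, Complex.exp (-(2 * π * w * I) * x - 2 * π * t * |x|) := by
      rw [Real.fourier_real_eq_integral_exp_smul]
      congr 1 with x
      rw [smul_eq_mul, Complex.ofReal_exp, ← Complex.exp_add]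
      push_cast
      ring_nf
    _ = 2 * (2 * π * t) / ((2 * π * t) ^ 2 - (-(2 * π * w * I)) ^ 2) :=
      integral_cexp_mul_sub_mul_abs hre
    _ = halfPlanePoissonKernel t w := by
      have hne : w ^ 2 + t ^ 2 ≠ 0 := by positivity
      rw [neg_sq, mul_pow _ I, Complex.I_sq, mul_neg_one, sub_neg_eq_add, halfPlanePoissonKernel]
      norm_cast
      field_simp
      ring

theorem fourier_halfPlanePoissonKernel {t : ℝ} (ht : 0 < t) (w : ℝ) :
    𝓕 (fun x ↦ (halfPlanePoissonKernel t x : ℂ)) w = Real.exp (-(2 * π * t * |w|)) := by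
  have hcont : Continuous fun x : ℝ ↦ (Real.exp (-(2 * π * t * |x|)) : ℂ) := by fun_prop
  have hf_int := integrable_exp_neg_mul_abs (r := 2 * π * t) (by positivity)
  have hfourier_int : Integrable (𝓕 fun x : ℝ ↦ (Real.exp (-(2 * π * t * |x|)) : ℂ)) := by
    rw [fourier_exp_neg_two_pi_mul_abs ht]
    exact (integrable_halfPlanePoissonKernel t).ofReal
  have hinv := congrFun (hcont.fourierInv_fourier_eq hf_int hfourier_int) (-w)
  simpa only [fourier_exp_neg_two_pi_mul_abs ht, Real.fourierInv_eq_fourier_neg, neg_neg, abs_neg]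
    using hinv

theorem fourier_intervalIntegral_halfPlanePoissonKernel {a b : ℝ} (ha : 0 ≤ a) (hb : 0 ≤ b)
    (w : ℝ) :
    𝓕 (fun x ↦ ∫ t in a..b, (halfPlanePoissonKernel t x : ℂ)) w =
      ((∫ t in a..b, Real.exp (-(2 * π * t * |w|)) : ℝ) : ℂ) := by
  have hf_int : Integrable (Function.uncurry fun t x ↦ (halfPlanePoissonKernel t x : ℂ))
      ((volume.restrict (Set.uIoc a b)).prod volume) :=
    (integrable_uncurry_halfPlanePoissonKernel (by simp)).ofReal
  rw [fourier_intervalIntegral hf_int, ← intervalIntegral.integral_ofReal]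
  refine intervalIntegral.integral_congr_ae (.of_forall fun t ht ↦ ?_)
  exact fourier_halfPlanePoissonKernel ((le_min ha hb).trans_lt ht.1) w

theorem intervalIntegral_halfPlanePoissonKernel (a b : ℝ) {x : ℝ} (hx : x ≠ 0) :
    ∫ t in a..b, halfPlanePoissonKernel t x =
      (2 * π)⁻¹ * Real.log ((x ^ 2 + b ^ 2) / (x ^ 2 + a ^ 2)) := by
  have hne (t : ℝ) : x ^ 2 + t ^ 2 ≠ 0 := by positivity
  have hderiv (t : ℝ) : HasDerivAt (fun t ↦ (2 * π)⁻¹ * Real.log (x ^ 2 + t ^ 2))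
      (halfPlanePoissonKernel t x) t := by
    convert! (((hasDerivAt_pow 2 t).const_add (x ^ 2)).log (hne t)).const_mul (2 * π)⁻¹ using 1
    rw [halfPlanePoissonKernel]
    push_cast
    field_simp [hne t]
  have hcont : Continuous fun t ↦ halfPlanePoissonKernel t x :=
    continuous_id.div (by fun_prop) fun t ↦ mul_ne_zero Real.pi_ne_zero (hne t)
  rw [intervalIntegral.integral_eq_sub_of_hasDerivAt (fun t _ ↦ hderiv t)
    (hcont.intervalIntegrable a b), Real.log_div (hne b) (hne a), mul_sub]

theorem intervalIntegral_exp_neg_mul (a b : ℝ) {r : ℝ} (hr : r ≠ 0) :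
    ∫ t in a..b, Real.exp (-(r * t)) = (Real.exp (-(r * a)) - Real.exp (-(r * b))) / r := by
  simp only [← neg_mul]
  rw [intervalIntegral.integral_comp_mul_left _ (neg_ne_zero.2 hr), integral_exp, smul_eq_mul]
  field

theorem fourier_log_sq_add_sq_div_sq_add_sq (a b : ℝ) {w : ℝ} (hw : w ≠ 0) :
    𝓕 (fun x : ℝ ↦ (Real.log ((x ^ 2 + a ^ 2) / (x ^ 2 + b ^ 2)) : ℂ)) w =
      (((Real.exp (-(2 * π * |w| * |b|)) - Real.exp (-(2 * π * |w| * |a|))) / |w| : ℝ) : ℂ) := by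
  have hlog : (fun x : ℝ ↦ (Real.log ((x ^ 2 + a ^ 2) / (x ^ 2 + b ^ 2)) : ℂ)) =ᵐ[volume]
      (2 * π : ℂ) • fun x ↦ ∫ t in |b|..|a|, (halfPlanePoissonKernel t x : ℂ) := by
    filter_upwards [Measure.ae_ne volume (0 : ℝ)] with x hx
    rw [Pi.smul_apply, intervalIntegral.integral_ofReal,
      intervalIntegral_halfPlanePoissonKernel _ _ hx, smul_eq_mul, sq_abs, sq_abs]
    norm_cast
    field
  have hr : 2 * π * |w| ≠ 0 := by positivity
  calc 𝓕 (fun x : ℝ ↦ (Real.log ((x ^ 2 + a ^ 2) / (x ^ 2 + b ^ 2)) : ℂ)) w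
    _ = 2 * π * 𝓕 (fun x ↦ ∫ t in |b|..|a|, (halfPlanePoissonKernel t x : ℂ)) w := by
      rw [Real.fourier_congr_ae hlog]
      exact congrFun (VectorFourier.fourierIntegral_const_smul _ _ _ _ _) w
    _ = ((2 * π * ∫ t in |b|..|a|, Real.exp (-(2 * π * |w| * t)) : ℝ) : ℂ) := by
      rw [fourier_intervalIntegral_halfPlanePoissonKernel (abs_nonneg b) (abs_nonneg a)]
      simp only [mul_right_comm (2 * π)]
      norm_cast
    _ = _ := by
      rw [intervalIntegral_exp_neg_mul _ _ hr]
      congr 1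
      field

theorem fourier_transform_L_kernel_general (y η : ℝ) {ζ : ℝ} (hζ : ζ ≠ 0) :
    ((1 / Real.sqrt (2 * Real.pi) : ℝ) : ℂ) *
        ∫ x : ℝ,
          ((Real.log ((x ^ 2 + (y - η) ^ 2) / (x ^ 2 + (y + η) ^ 2)) : ℝ) : ℂ) *
            Complex.exp (-(Complex.I * x * ζ)) =
      ((Real.sqrt (2 * Real.pi) * (1 / |ζ|) *
          (Real.exp (-(|y + η| * |ζ|)) - Real.exp (-(|y - η| * |ζ|))) : ℝ) : ℂ) := by
  have hw : ζ / (2 * π) ≠ 0 := div_ne_zero hζ (by positivity)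
  have habs : |ζ / (2 * π)| = |ζ| / (2 * π) := by rw [abs_div, abs_of_pos Real.two_pi_pos]
  have hexponent (c : ℝ) : 2 * π * (|ζ| / (2 * π)) * c = c * |ζ| := by field
  have hsqrt : 1 / √(2 * π) * (2 * π) = √(2 * π) := by rw [one_div_mul_eq_div, Real.div_sqrt]
  rw [← fourier_div_two_pi_eq_integral, fourier_log_sq_add_sq_div_sq_add_sq _ _ hw, habs,
    hexponent, hexponent, div_div_eq_mul_div, ← Complex.ofReal_mul]
  congr 1
  linear_combination
    (Real.exp (-(|y + η| * |ζ|)) - Real.exp (-(|y - η| * |ζ|))) * |ζ|⁻¹ * hsqrt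

/-- the Fourier transform (normalization `ĝ(ζ) = (1/√(2π)) ∫ g(x) e^{-ixζ} dx`)
of `L_{(η,y)}(x) = ln[(x² + (y-η)²)/(x² + (y+η)²)]`, for `0 < y < 1`, `0 < η < 1` and `ζ ≠ 0`,
equals `√(2π) (1/|ζ|) [e^{-(y+η)|ζ|} - e^{-|y-η||ζ|}]`. -/
theorem fourier_transform_L_kernel (y η : ℝ) (hy0 : 0 < y) (hy1 : y < 1)
    (hη0 : 0 < η) (hη1 : η < 1) (ζ : ℝ) (hζ : ζ ≠ 0) :
    ((1 / Real.sqrt (2 * Real.pi) : ℝ) : ℂ) *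
        ∫ x : ℝ,
          ((Real.log ((x ^ 2 + (y - η) ^ 2) / (x ^ 2 + (y + η) ^ 2)) : ℝ) : ℂ) *
            Complex.exp (-(Complex.I * x * ζ)) =
      ((Real.sqrt (2 * Real.pi) * (1 / |ζ|) *
          (Real.exp (-((y + η) * |ζ|)) - Real.exp (-(|y - η| * |ζ|))) : ℝ) : ℂ) := by
  simpa only [abs_of_pos (add_pos hy0 hη0)] using fourier_transform_L_kernel_general y η hζ
end

section
/- Let 0 < ε < 1 and let φ, φ_ε ∈ L²(ℝ) satisfy ‖φ_ε − φ‖_{L²(ℝ)} < ε. Assume ζ ↦ e^{|ζ|} φ̂(ζ) belongs to L²(ℝ). Define φ̃_ε(x) = (1/√(2π)) ∫_{|ζ| < ε^{-1/2}} φ̂_ε(ζ) e^{i ζ x} dζ. Then ‖φ̃_ε − φ‖_{L²(ℝ)} < ε · √(1 + ‖e^{|ζ|} φ̂(ζ)‖²_{L²(ℝ)}). -/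
open MeasureTheory

/-- The Fourier transform of a real-valued function on `ℝ`, with the normalization
`ĝ(ζ) = (1/√(2π)) ∫ g(x) e^{-ixζ} dx`. -/
noncomputable def ft (g : ℝ → ℝ) (ζ : ℝ) : ℂ :=
  ((1 / Real.sqrt (2 * Real.pi) : ℝ) : ℂ) *
    ∫ x : ℝ, (g x : ℂ) * Complex.exp (-(Complex.I * x * ζ))

/-- The frequency-truncated reconstruction
`φ̃_ε(x) = (1/√(2π)) ∫_{|ζ| < ε^{-1/2}} φ̂_ε(ζ) e^{iζx} dζ`. -/
noncomputable def truncRecon (φε : ℝ → ℝ) (ε : ℝ) (x : ℝ) : ℂ :=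
  ((1 / Real.sqrt (2 * Real.pi) : ℝ) : ℂ) *
    ∫ ζ in {ζ : ℝ | |ζ| < (Real.sqrt ε)⁻¹}, ft φε ζ * Complex.exp (Complex.I * ζ * x)

/-!
On the Fourier side the band `|ζ| < ε^{-1/2}` splits the error orthogonally. Inside the band it is
the transform of `φε - φ`, so by Plancherel it contributes less than `ε²`. Outside the band it is
the transform of `φ` alone, and there `1 ≤ ε t² ≤ ε e^t` for `t = |ζ| ≥ ε^{-1/2}`, so it
contributes at most `ε² ‖e^{|ζ|} φ̂‖²`.

Plancherel for the integral transform on `L¹ ∩ L²` comes from the `L²` transform of Mathlib: the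
two agree as tempered distributions, hence almost everywhere.
-/

open Metric Set
open scoped FourierTransform SchwartzMap ContDiff

section Integrals

variable {α E : Type*} [MeasurableSpace α] {μ : Measure α} [NormedAddCommGroup E]

theorem norm_toLp_sq_eq_integral [InnerProductSpace ℂ E] {f : α → E} (hf : MemLp f 2 μ) :
    ‖hf.toLp f‖ ^ 2 = ∫ x, ‖f x‖ ^ 2 ∂μ := by
  rw [← inner_self_eq_norm_sq (𝕜 := ℂ), L2.inner_def, ← integral_re (L2.integrable_inner _ _)]
  refine integral_congr_ae ?_
  filter_upwards [hf.coeFn_toLp] with x hx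
  rw [hx, inner_self_eq_norm_sq]

theorem integral_norm_sq_indicator_sub {a b : α → E} (ha : MemLp a 2 μ) (hb : MemLp b 2 μ)
    {s : Set α} (hs : MeasurableSet s) :
    ∫ x, ‖s.indicator a x - b x‖ ^ 2 ∂μ =
      ∫ x in s, ‖a x - b x‖ ^ 2 ∂μ + ∫ x in sᶜ, ‖b x‖ ^ 2 ∂μ := by
  have hint : Integrable (fun x => ‖s.indicator a x - b x‖ ^ 2) μ :=
    ((ha.indicator hs).sub hb).integrable_norm_pow two_ne_zero
  rw [← integral_add_compl hs hint]
  congr 1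
  · refine setIntegral_congr_fun hs fun x hx => ?_
    simp only [indicator_of_mem hx]
  · refine setIntegral_congr_fun hs.compl fun x hx => ?_
    simp only [indicator_of_notMem hx, zero_sub, norm_neg]

theorem setIntegral_norm_sq_le_of_norm_le_mul {F : Type*} [NormedAddCommGroup F]
    {f : α → E} {g : α → F} (hg : MemLp g 2 μ) {s : Set α} (hs : MeasurableSet s) {c : ℝ}
    (hfg : ∀ x ∈ s, ‖f x‖ ≤ c * ‖g x‖) :
    ∫ x in s, ‖f x‖ ^ 2 ∂μ ≤ c ^ 2 * ∫ x, ‖g x‖ ^ 2 ∂μ := by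
  have hint : Integrable (fun x => c ^ 2 * ‖g x‖ ^ 2) μ :=
    (hg.integrable_norm_pow two_ne_zero).const_mul _
  calc ∫ x in s, ‖f x‖ ^ 2 ∂μ ≤ ∫ x in s, c ^ 2 * ‖g x‖ ^ 2 ∂μ := by
        refine integral_mono_of_nonneg (.of_forall fun x => by positivity) hint.integrableOn ?_
        filter_upwards [ae_restrict_mem hs] with x hx
        rw [← mul_pow]
        exact pow_le_pow_left₀ (norm_nonneg _) (hfg x hx) 2
    _ ≤ ∫ x, c ^ 2 * ‖g x‖ ^ 2 ∂μ :=
        setIntegral_le_integral hint (.of_forall fun x => by positivity)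
    _ = c ^ 2 * ∫ x, ‖g x‖ ^ 2 ∂μ := integral_const_mul _ _

end Integrals

section Plancherel

variable {V E : Type*} [NormedAddCommGroup V] [InnerProductSpace ℝ V] [FiniteDimensional ℝ V]
  [MeasurableSpace V] [BorelSpace V]

section L1

variable [NormedAddCommGroup E] [NormedSpace ℂ E]

theorem continuous_fourier_of_integrable {f : V → E} (hf : Integrable f) : Continuous (𝓕 f) :=
  VectorFourier.fourierIntegral_continuous Real.continuous_fourierChar continuous_inner hf

theorem continuous_fourierInv_of_integrable {f : V → E} (hf : Integrable f) :
    Continuous (𝓕⁻ f) :=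
  VectorFourier.fourierIntegral_continuous Real.continuous_fourierChar continuous_inner.neg hf

theorem fourier_sub_of_integrable {f g : V → E} (hf : Integrable f) (hg : Integrable g) :
    𝓕 (f - g) = 𝓕 f - 𝓕 g := by
  ext ξ
  simp only [Real.fourier_eq, Pi.sub_apply, smul_sub]
  exact integral_sub ((Real.fourierIntegral_convergent_iff ξ).2 hf)
    ((Real.fourierIntegral_convergent_iff ξ).2 hg)

variable [CompleteSpace E]

theorem integral_fourier_smul_eq_of_integrable {g : V → ℂ} {f : V → E} (hg : Integrable g)
    (hf : Integrable f) : ∫ x, 𝓕 g x • f x = ∫ x, g x • 𝓕 f x := by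
  have h := VectorFourier.integral_fourierIntegral_smul_eq_flip (L := innerₗ V) (μ := volume)
    (ν := volume) Real.continuous_fourierChar continuous_inner hg hf
  rwa [flip_innerₗ] at h

theorem integral_fourierInv_smul_eq_of_integrable {g : V → ℂ} {f : V → E} (hg : Integrable g)
    (hf : Integrable f) : ∫ x, 𝓕⁻ g x • f x = ∫ x, g x • 𝓕⁻ f x := by
  have h := VectorFourier.integral_fourierIntegral_smul_eq_flip (L := -innerₗ V) (μ := volume)
    (ν := volume) Real.continuous_fourierChar continuous_inner.neg hg hf
  rwa [show (-innerₗ V).flip = -innerₗ V from congrArg Neg.neg (flip_innerₗ V)] at h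

theorem ae_eq_of_integral_schwartzMap_smul_eq {μ : Measure V} {f f' : V → E}
    (hf : LocallyIntegrable f μ) (hf' : LocallyIntegrable f' μ)
    (h : ∀ g : 𝓢(V, ℂ), ∫ x, g x • f x ∂μ = ∫ x, g x • f' x ∂μ) : f =ᵐ[μ] f' := by
  refine ae_eq_of_integral_contDiff_smul_eq hf hf' fun g hg hgc => ?_
  have hgc' : HasCompactSupport (Complex.ofRealCLM ∘ g) := hgc.comp_left rfl
  have hg' : ContDiff ℝ ∞ (Complex.ofRealCLM ∘ g) := by fun_prop
  simpa using h (hgc'.toSchwartzMap hg')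

end L1

variable [NormedAddCommGroup E] [InnerProductSpace ℂ E] [CompleteSpace E]

theorem coeFn_fourier_toLp {f : V → E} (hf1 : Integrable f) (hf2 : MemLp f 2) :
    (𝓕 (hf2.toLp f) : Lp E 2 (volume : Measure V)) =ᵐ[volume] 𝓕 f := by
  refine ae_eq_of_integral_schwartzMap_smul_eq ((Lp.memLp _).locallyIntegrable one_le_two)
    (continuous_fourier_of_integrable hf1).locallyIntegrable fun g => ?_
  calc ∫ x, g x • (𝓕 (hf2.toLp f) : Lp E 2 (volume : Measure V)) x
      = ∫ x, 𝓕 g x • hf2.toLp f x := by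
        simpa using DFunLike.congr_fun (Lp.fourier_toTemperedDistribution_eq (hf2.toLp f)).symm g
    _ = ∫ x, 𝓕 (g : V → ℂ) x • f x := by
        refine integral_congr_ae ?_
        filter_upwards [hf2.coeFn_toLp] with x hx
        rw [hx, SchwartzMap.fourier_coe]
    _ = ∫ x, g x • 𝓕 f x := integral_fourier_smul_eq_of_integrable g.integrable hf1

theorem coeFn_fourierInv_toLp {f : V → E} (hf1 : Integrable f) (hf2 : MemLp f 2) :
    (𝓕⁻ (hf2.toLp f) : Lp E 2 (volume : Measure V)) =ᵐ[volume] 𝓕⁻ f := by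
  refine ae_eq_of_integral_schwartzMap_smul_eq ((Lp.memLp _).locallyIntegrable one_le_two)
    (continuous_fourierInv_of_integrable hf1).locallyIntegrable fun g => ?_
  calc ∫ x, g x • (𝓕⁻ (hf2.toLp f) : Lp E 2 (volume : Measure V)) x
      = ∫ x, 𝓕⁻ g x • hf2.toLp f x := by
        simpa using DFunLike.congr_fun (Lp.fourierInv_toTemperedDistribution_eq (hf2.toLp f)).symm g
    _ = ∫ x, 𝓕⁻ (g : V → ℂ) x • f x := by
        refine integral_congr_ae ?_
        filter_upwards [hf2.coeFn_toLp] with x hx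
        rw [hx, SchwartzMap.fourierInv_coe]
    _ = ∫ x, g x • 𝓕⁻ f x := integral_fourierInv_smul_eq_of_integrable g.integrable hf1

theorem memLp_fourier {f : V → E} (hf1 : Integrable f) (hf2 : MemLp f 2) :
    MemLp (𝓕 f) 2 :=
  (memLp_congr_ae (coeFn_fourier_toLp hf1 hf2)).1 (Lp.memLp _)

theorem memLp_fourierInv {f : V → E} (hf1 : Integrable f) (hf2 : MemLp f 2) :
    MemLp (𝓕⁻ f) 2 :=
  (memLp_congr_ae (coeFn_fourierInv_toLp hf1 hf2)).1 (Lp.memLp _)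

theorem fourier_toLp {f : V → E} (hf1 : Integrable f) (hf2 : MemLp f 2) :
    𝓕 (hf2.toLp f) = (memLp_fourier hf1 hf2).toLp (𝓕 f) :=
  Lp.ext ((coeFn_fourier_toLp hf1 hf2).trans (memLp_fourier hf1 hf2).coeFn_toLp.symm)

theorem fourierInv_toLp {f : V → E} (hf1 : Integrable f) (hf2 : MemLp f 2) :
    𝓕⁻ (hf2.toLp f) = (memLp_fourierInv hf1 hf2).toLp (𝓕⁻ f) :=
  Lp.ext ((coeFn_fourierInv_toLp hf1 hf2).trans (memLp_fourierInv hf1 hf2).coeFn_toLp.symm)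

theorem integral_norm_sq_fourier {f : V → E} (hf1 : Integrable f) (hf2 : MemLp f 2) :
    ∫ ξ, ‖𝓕 f ξ‖ ^ 2 = ∫ x, ‖f x‖ ^ 2 := by
  rw [← norm_toLp_sq_eq_integral hf2, ← norm_toLp_sq_eq_integral (memLp_fourier hf1 hf2),
    ← fourier_toLp hf1, Lp.norm_fourier_eq]

theorem integral_norm_sq_fourierInv_sub {f g : V → E} (hf1 : Integrable f) (hf2 : MemLp f 2)
    (hg1 : Integrable g) (hg2 : MemLp g 2) :
    ∫ x, ‖𝓕⁻ g x - f x‖ ^ 2 = ∫ ξ, ‖g ξ - 𝓕 f ξ‖ ^ 2 := by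
  have hL : MemLp (𝓕⁻ g - f) 2 := (memLp_fourierInv hg1 hg2).sub hf2
  have hR : MemLp (g - 𝓕 f) 2 := hg2.sub (memLp_fourier hf1 hf2)
  have hFourier : 𝓕 (hL.toLp (𝓕⁻ g - f)) = hR.toLp (g - 𝓕 f) := by
    rw [MemLp.toLp_sub (memLp_fourierInv hg1 hg2) hf2, ← fourierInv_toLp hg1 hg2, sub_eq_add_neg,
      FourierTransform.fourier_add, FourierTransform.fourier_neg, ← sub_eq_add_neg,
      FourierTransform.fourier_fourierInv_eq, fourier_toLp hf1 hf2, ← MemLp.toLp_sub hg2]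
  calc ∫ x, ‖𝓕⁻ g x - f x‖ ^ 2 = ‖hL.toLp (𝓕⁻ g - f)‖ ^ 2 := (norm_toLp_sq_eq_integral hL).symm
    _ = ‖hR.toLp (g - 𝓕 f)‖ ^ 2 := by rw [← hFourier, Lp.norm_fourier_eq]
    _ = ∫ ξ, ‖g ξ - 𝓕 f ξ‖ ^ 2 := norm_toLp_sq_eq_integral hR

end Plancherel

section FrequencyTruncation

variable {V E : Type*} [NormedAddCommGroup V] [InnerProductSpace ℝ V] [FiniteDimensional ℝ V]
  [MeasurableSpace V] [BorelSpace V] [NormedAddCommGroup E]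

/-- The frequency truncation of `g` to the band `S`: the Fourier multiplier with symbol `1_S`,
in Mathlib's normalization `𝓕 g ξ = ∫ g(x) e^{-2πi⟪x, ξ⟫} dx`. -/
noncomputable def freqTrunc [NormedSpace ℂ E] (S : Set V) (g : V → E) : V → E :=
  𝓕⁻ (S.indicator (𝓕 g))

variable [InnerProductSpace ℂ E] [CompleteSpace E] {f g : V → E} {S : Set V}

theorem integral_norm_sq_freqTrunc_sub (hf1 : Integrable f) (hf2 : MemLp f 2)
    (hg1 : Integrable g) (hg2 : MemLp g 2) (hS : MeasurableSet S) (hSfin : volume S < ⊤) :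
    ∫ x, ‖freqTrunc S g x - f x‖ ^ 2 =
      (∫ ξ in S, ‖𝓕 (g - f) ξ‖ ^ 2) + ∫ ξ in Sᶜ, ‖𝓕 f ξ‖ ^ 2 := by
  have hFg : MemLp (𝓕 g) 2 := memLp_fourier hg1 hg2
  have : IsFiniteMeasure (volume.restrict S) := isFiniteMeasure_restrict.2 hSfin.ne
  have hint : Integrable (S.indicator (𝓕 g)) :=
    (integrable_indicator_iff hS).2 ((hFg.restrict S).integrable one_le_two)
  rw [freqTrunc, integral_norm_sq_fourierInv_sub hf1 hf2 hint (hFg.indicator hS),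
    integral_norm_sq_indicator_sub hFg (memLp_fourier hf1 hf2) hS,
    fourier_sub_of_integrable hg1 hf1]
  rfl

theorem integral_norm_sq_freqTrunc_sub_le (hf1 : Integrable f) (hf2 : MemLp f 2)
    (hg1 : Integrable g) (hg2 : MemLp g 2) (hS : MeasurableSet S) (hSfin : volume S < ⊤) :
    ∫ x, ‖freqTrunc S g x - f x‖ ^ 2 ≤
      (∫ x, ‖g x - f x‖ ^ 2) + ∫ ξ in Sᶜ, ‖𝓕 f ξ‖ ^ 2 := by
  rw [integral_norm_sq_freqTrunc_sub hf1 hf2 hg1 hg2 hS hSfin]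
  gcongr
  calc ∫ ξ in S, ‖𝓕 (g - f) ξ‖ ^ 2 ≤ ∫ ξ, ‖𝓕 (g - f) ξ‖ ^ 2 :=
        setIntegral_le_integral
          ((memLp_fourier (hg1.sub hf1) (hg2.sub hf2)).integrable_norm_pow two_ne_zero)
          (.of_forall fun ξ => by positivity)
    _ = ∫ x, ‖g x - f x‖ ^ 2 := integral_norm_sq_fourier (hg1.sub hf1) (hg2.sub hf2)

end FrequencyTruncation

section Rescaling

theorem setIntegral_comp_div_of_pos {E : Type*} [NormedAddCommGroup E] [NormedSpace ℝ E]
    (h : ℝ → E) {a : ℝ} (ha : 0 < a) (A : Set ℝ) :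
    ∫ ζ in A, h (ζ / a) = a • ∫ ξ in (a * ·) ⁻¹' A, h ξ := by
  simpa [div_eq_inv_mul, ← preimage_smul₀ ha.ne'] using
    Measure.setIntegral_comp_smul_of_pos volume h A (inv_pos.2 ha)

theorem ft_eq_fourier (g : ℝ → ℝ) (ζ : ℝ) :
    ft g ζ = ((√(2 * Real.pi))⁻¹ : ℝ) * 𝓕 (fun x => (g x : ℂ)) (ζ / (2 * Real.pi)) := by
  rw [ft, one_div, Real.fourier_real_eq_integral_exp_smul]
  congr 2 with x
  rw [smul_eq_mul, mul_comm]
  congr 2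
  push_cast
  field_simp

theorem setIntegral_norm_sq_ft (g : ℝ → ℝ) (A : Set ℝ) :
    ∫ ζ in A, ‖ft g ζ‖ ^ 2 =
      ∫ ξ in (2 * Real.pi * ·) ⁻¹' A, ‖𝓕 (fun x => (g x : ℂ)) ξ‖ ^ 2 := by
  have hnorm (ζ : ℝ) : ‖ft g ζ‖ ^ 2 =
      (2 * Real.pi)⁻¹ * ‖𝓕 (fun x => (g x : ℂ)) (ζ / (2 * Real.pi))‖ ^ 2 := by
    rw [ft_eq_fourier, norm_mul, mul_pow, Complex.norm_real, Real.norm_eq_abs, sq_abs, inv_pow,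
      Real.sq_sqrt Real.two_pi_pos.le]
  simp_rw [hnorm]
  rw [integral_const_mul,
    setIntegral_comp_div_of_pos (fun ξ => ‖𝓕 (fun x => (g x : ℂ)) ξ‖ ^ 2) Real.two_pi_pos,
    smul_eq_mul, inv_mul_cancel_left₀ Real.two_pi_pos.ne']

theorem truncRecon_eq_freqTrunc (g : ℝ → ℝ) (ε x : ℝ) :
    truncRecon g ε x =
      freqTrunc ((2 * Real.pi * ·) ⁻¹' ball 0 (√ε)⁻¹) (fun y => (g y : ℂ)) x := by
  set S : Set ℝ := (2 * Real.pi * ·) ⁻¹' ball 0 (√ε)⁻¹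
  have hS : MeasurableSet S := measurableSet_ball.preimage (measurable_const_mul _)
  set h : ℝ → ℂ := fun ξ =>
    Complex.exp ((2 * Real.pi * (x * ξ) : ℝ) * Complex.I) • 𝓕 (fun y => (g y : ℂ)) ξ
  have hconst : (((√(2 * Real.pi))⁻¹ : ℝ) : ℂ) * ((√(2 * Real.pi))⁻¹ : ℝ) =
      ((2 * Real.pi)⁻¹ : ℝ) := by
    rw [← Complex.ofReal_mul, ← mul_inv, Real.mul_self_sqrt Real.two_pi_pos.le]
  have hintegrand (ζ : ℝ) : ft g ζ * Complex.exp (Complex.I * ζ * x) =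
      ((√(2 * Real.pi))⁻¹ : ℝ) * h (ζ / (2 * Real.pi)) := by
    have hphase : 2 * Real.pi * (x * (ζ / (2 * Real.pi))) = x * ζ := by field_simp
    simp only [h, hphase, ft_eq_fourier, smul_eq_mul]
    push_cast
    ring_nf
  calc truncRecon g ε x
      = ((2 * Real.pi)⁻¹ : ℝ) • ∫ ζ in ball 0 (√ε)⁻¹, h (ζ / (2 * Real.pi)) := by
        simp only [truncRecon, hintegrand, one_div, integral_const_mul]
        rw [← mul_assoc, hconst, Complex.real_smul, ball_zero_eq]
        rfl
    _ = ∫ ξ in S, h ξ := by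
        rw [setIntegral_comp_div_of_pos h Real.two_pi_pos, inv_smul_smul₀ Real.two_pi_pos.ne']
    _ = freqTrunc S (fun y => (g y : ℂ)) x := by
        rw [freqTrunc, Real.fourierInv_eq', ← integral_indicator hS]
        refine integral_congr_ae (.of_forall fun ξ => ?_)
        by_cases hξ : ξ ∈ S <;> simp [h, hξ]

end Rescaling

theorem sq_le_exp_of_nonneg {x : ℝ} (hx : 0 ≤ x) : x ^ 2 ≤ Real.exp x := by
  calc x ^ 2 ≤ Real.exp (x / 2) ^ 2 := by
        gcongr
        linarith [Real.two_mul_le_exp (x := x / 2)]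
    _ = Real.exp x := by rw [← Real.exp_nat_mul]; ring_nf

theorem one_le_mul_exp_of_inv_sqrt_le {ε t : ℝ} (hε : 0 < ε) (ht : (√ε)⁻¹ ≤ t) :
    1 ≤ ε * Real.exp t := by
  calc 1 = ε * (√ε)⁻¹ ^ 2 := by rw [inv_pow, Real.sq_sqrt hε.le, mul_inv_cancel₀ hε.ne']
    _ ≤ ε * t ^ 2 := by gcongr
    _ ≤ ε * Real.exp t := by
        gcongr
        exact sq_le_exp_of_nonneg ((by positivity : 0 ≤ (√ε)⁻¹).trans ht)

theorem setIntegral_compl_ball_norm_sq_ft_le {ε : ℝ} (hε : 0 < ε) {φ : ℝ → ℝ}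
    (hhat : MemLp (fun ζ : ℝ => ((Real.exp |ζ| : ℝ) : ℂ) * ft φ ζ) 2) :
    ∫ ζ in (ball 0 (√ε)⁻¹)ᶜ, ‖ft φ ζ‖ ^ 2 ≤
      ε ^ 2 * ∫ ζ : ℝ, ‖((Real.exp |ζ| : ℝ) : ℂ) * ft φ ζ‖ ^ 2 := by
  refine setIntegral_norm_sq_le_of_norm_le_mul hhat measurableSet_ball.compl fun ζ hζ => ?_
  have hζ' : (√ε)⁻¹ ≤ |ζ| := by simpa using hζ
  rw [norm_mul, Complex.norm_real, Real.norm_eq_abs, Real.abs_exp, ← mul_assoc]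
  exact le_mul_of_one_le_left (norm_nonneg _) (one_le_mul_exp_of_inv_sqrt_le hε hζ')

theorem trunc_recon_L2_estimate_general (ε : ℝ) (φ φε : ℝ → ℝ)
    (hφ1 : Integrable φ) (hφ2 : MemLp φ 2 (volume : Measure ℝ))
    (hφε1 : Integrable φε) (hφε2 : MemLp φε 2 (volume : Measure ℝ))
    (hnear : Real.sqrt (∫ x : ℝ, (φε x - φ x) ^ 2) < ε)
    (hhat : MemLp (fun ζ : ℝ => ((Real.exp |ζ| : ℝ) : ℂ) * ft φ ζ) 2
      (volume : Measure ℝ)) :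
    Real.sqrt (∫ x : ℝ, ‖truncRecon φε ε x - (φ x : ℂ)‖ ^ 2) <
      ε * Real.sqrt (1 + ∫ ζ : ℝ, ‖((Real.exp |ζ| : ℝ) : ℂ) * ft φ ζ‖ ^ 2) := by
  have hε : 0 < ε := (Real.sqrt_nonneg _).trans_lt hnear
  let B : Set ℝ := ball 0 (√ε)⁻¹
  have hSfin : volume ((2 * Real.pi * ·) ⁻¹' B) < ⊤ := by
    rw [Real.volume_preimage_mul_left Real.two_pi_pos.ne']
    exact ENNReal.mul_lt_top ENNReal.ofReal_lt_top measure_ball_lt_top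
  let N := ∫ ζ : ℝ, ‖((Real.exp |ζ| : ℝ) : ℂ) * ft φ ζ‖ ^ 2
  rw [Real.sqrt_lt' (by positivity), mul_pow, Real.sq_sqrt (by positivity)]
  calc ∫ x, ‖truncRecon φε ε x - (φ x : ℂ)‖ ^ 2
      ≤ (∫ x, ‖(φε x : ℂ) - φ x‖ ^ 2) +
          ∫ ξ in ((2 * Real.pi * ·) ⁻¹' B)ᶜ, ‖𝓕 (fun x => (φ x : ℂ)) ξ‖ ^ 2 := by
        simp_rw [truncRecon_eq_freqTrunc]
        exact integral_norm_sq_freqTrunc_sub_le hφ1.ofReal hφ2.ofReal hφε1.ofReal hφε2.ofReal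
          (measurableSet_ball.preimage (measurable_const_mul _)) hSfin
    _ = (∫ x, (φε x - φ x) ^ 2) + ∫ ζ in Bᶜ, ‖ft φ ζ‖ ^ 2 := by
        rw [setIntegral_norm_sq_ft, preimage_compl]
        simp_rw [← Complex.ofReal_sub, Complex.norm_real, Real.norm_eq_abs, sq_abs]
    _ < ε ^ 2 + ε ^ 2 * N := add_lt_add_of_lt_of_le ((Real.sqrt_lt' hε).1 hnear)
        (setIntegral_compl_ball_norm_sq_ft_le hε hhat)
    _ = ε ^ 2 * (1 + N) := by ring

/-- if `‖φ_ε - φ‖_{L²} < ε` and `e^{|ζ|} φ̂ ∈ L²(ℝ)`, then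
`‖φ̃_ε - φ‖_{L²} < ε √(1 + ‖e^{|ζ|} φ̂‖²_{L²})`. -/
theorem trunc_recon_L2_estimate (ε : ℝ) (hε0 : 0 < ε) (hε1 : ε < 1)
    (φ φε : ℝ → ℝ)
    (hφ1 : Integrable φ) (hφ2 : MemLp φ 2 (volume : Measure ℝ))
    (hφε1 : Integrable φε) (hφε2 : MemLp φε 2 (volume : Measure ℝ))
    (hnear : Real.sqrt (∫ x : ℝ, (φε x - φ x) ^ 2) < ε)
    (hhat : MemLp (fun ζ : ℝ => ((Real.exp |ζ| : ℝ) : ℂ) * ft φ ζ) 2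
      (volume : Measure ℝ)) :
    Real.sqrt (∫ x : ℝ, ‖truncRecon φε ε x - (φ x : ℂ)‖ ^ 2) <
      ε * Real.sqrt (1 + ∫ ζ : ℝ, ‖((Real.exp |ζ| : ℝ) : ℂ) * ft φ ζ‖ ^ 2) := by
  exact trunc_recon_L2_estimate_general ε φ φε hφ1 hφ2 hφε1 hφε2 hnear hhat
end

section
/- Let 0 < ε < e^{-3}, let C₃ > 0, and let χ, φ̂ ∈ L²(ℝ) with ‖χ − φ̂‖_{L²(ℝ)} < C₃ ε. Assume ζ ↦ ζ φ̂(ζ) e^{|ζ|} belongs to L²(ℝ). Define χ_log(ζ) = χ(ζ) for |ζ| < (1/6) ln(1/ε) and χ_log(ζ) = 0 otherwise. Then ‖(χ_log(ζ) − φ̂(ζ)) e^{|ζ|}‖²_{L²(ℝ)} < (C₃² + 36 ‖ζ φ̂(ζ) e^{|ζ|}‖²_{L²(ℝ)}) · (ln(1/ε))^{-2}. -/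
open MeasureTheory

/-!
Split the frequencies at `R = a log (1/ε)`. Below `R` the weight `e^{‖x‖}` is at most
`e^R = ε^{-a}`, so the error `f - g`, of size `C ε`, contributes at most `C ε^{1-a}`. Above `R`
only `g` survives, and `1 ≤ R⁻¹ ‖x‖` there. The first contribution is absorbed because
`ε^{1-a} ≤ (log (1/ε))⁻¹` as soon as `1 - a ≥ e⁻¹`; the paper's cutoff is `a = 1/6`.
-/

theorem le_exp_mul_of_exp_neg_one_le {b x : ℝ} (hb : Real.exp (-1) ≤ b) (hx : 0 ≤ x) :
    x ≤ Real.exp (b * x) :=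
  calc x = Real.exp 1 * (Real.exp (-1) * x) := by
        rw [← mul_assoc, ← Real.exp_add, add_neg_cancel, Real.exp_zero, one_mul]
    _ ≤ Real.exp 1 * (b * x) := by gcongr
    _ ≤ Real.exp (b * x) := Real.exp_one_mul_le_exp

theorem exp_mul_log_one_div_mul_self_le {a ε : ℝ} (ha : a ≤ 1 - Real.exp (-1)) (hε0 : 0 < ε)
    (hε1 : ε < 1) :
    Real.exp (a * Real.log (1 / ε)) * ε ≤ (Real.log (1 / ε))⁻¹ := by
  have hL : 0 < Real.log (1 / ε) := Real.log_pos (one_lt_one_div hε0 hε1)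
  have hε : ε = Real.exp (-Real.log (1 / ε)) := by
    rw [one_div, Real.log_inv, neg_neg, Real.exp_log hε0]
  calc Real.exp (a * Real.log (1 / ε)) * ε
      = Real.exp (a * Real.log (1 / ε)) * Real.exp (-Real.log (1 / ε)) := by rw [← hε]
    _ = (Real.exp ((1 - a) * Real.log (1 / ε)))⁻¹ := by
        rw [← Real.exp_add, ← Real.exp_neg]
        ring_nf
    _ ≤ (Real.log (1 / ε))⁻¹ :=
        inv_anti₀ hL (le_exp_mul_of_exp_neg_one_le (by linarith) hL.le)

section Truncation

variable {E F : Type*} [SeminormedAddGroup E] [SeminormedAddGroup F] {f g : E → F}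
  {W : ℝ → ℝ} {R : ℝ}

theorem norm_truncation_sub_mul_pow_le (hW : MonotoneOn W (Set.Ici 0)) (hW0 : 0 ≤ W 0)
    (hR : 0 < R) (p : ℕ) (x : E) :
    (‖(if ‖x‖ < R then f x else 0) - g x‖ * W ‖x‖) ^ p ≤
      W R ^ p * ‖f x - g x‖ ^ p + R⁻¹ ^ p * (‖x‖ * ‖g x‖ * W ‖x‖) ^ p := by
  have hW_nonneg {t : ℝ} (ht : 0 ≤ t) : 0 ≤ W t := hW0.trans (hW Set.self_mem_Ici ht ht)
  have hWR : 0 ≤ W R := hW_nonneg hR.le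
  have hWx : 0 ≤ W ‖x‖ := hW_nonneg (norm_nonneg x)
  split_ifs with hx
  · have hlow : ‖f x - g x‖ * W ‖x‖ ≤ W R * ‖f x - g x‖ := by
      rw [mul_comm]
      gcongr
      exact hW (norm_nonneg x) hR.le hx.le
    calc (‖f x - g x‖ * W ‖x‖) ^ p ≤ (W R * ‖f x - g x‖) ^ p := by gcongr
      _ = W R ^ p * ‖f x - g x‖ ^ p := mul_pow ..
      _ ≤ _ := le_add_of_nonneg_right (by positivity)
  · have hhigh : ‖0 - g x‖ * W ‖x‖ ≤ R⁻¹ * (‖x‖ * ‖g x‖ * W ‖x‖) := by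
      rw [zero_sub, norm_neg, mul_assoc, ← mul_assoc]
      exact le_mul_of_one_le_left (by positivity) ((one_le_inv_mul₀ hR).2 (not_lt.1 hx))
    calc (‖0 - g x‖ * W ‖x‖) ^ p ≤ (R⁻¹ * (‖x‖ * ‖g x‖ * W ‖x‖)) ^ p := by gcongr
      _ = R⁻¹ ^ p * (‖x‖ * ‖g x‖ * W ‖x‖) ^ p := mul_pow ..
      _ ≤ _ := le_add_of_nonneg_left (by positivity)

variable [MeasurableSpace E] {μ : Measure E} {p : ℕ}

theorem integral_norm_truncation_sub_mul_pow_le (hW : MonotoneOn W (Set.Ici 0)) (hW0 : 0 ≤ W 0)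
    (hR : 0 < R) (hfg : Integrable (fun x ↦ ‖f x - g x‖ ^ p) μ)
    (hg : Integrable (fun x ↦ (‖x‖ * ‖g x‖ * W ‖x‖) ^ p) μ) :
    ∫ x, (‖(if ‖x‖ < R then f x else 0) - g x‖ * W ‖x‖) ^ p ∂μ ≤
      W R ^ p * ∫ x, ‖f x - g x‖ ^ p ∂μ + R⁻¹ ^ p * ∫ x, (‖x‖ * ‖g x‖ * W ‖x‖) ^ p ∂μ := by
  have hW_nonneg (x : E) : 0 ≤ W ‖x‖ :=
    hW0.trans (hW Set.self_mem_Ici (norm_nonneg x) (norm_nonneg x))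
  rw [← integral_const_mul, ← integral_const_mul,
    ← integral_add (hfg.const_mul _) (hg.const_mul _)]
  exact integral_mono_of_nonneg
    (.of_forall fun x ↦ pow_nonneg (mul_nonneg (norm_nonneg _) (hW_nonneg x)) p)
    ((hfg.const_mul _).add (hg.const_mul _))
    (.of_forall (norm_truncation_sub_mul_pow_le hW hW0 hR p))

theorem log_truncation_estimate_general {a ε C : ℝ} (ha0 : 0 < a) (ha1 : a ≤ 1 - Real.exp (-1))
    (hε0 : 0 < ε) (hε1 : ε < 1) (hfg : Integrable (fun x ↦ ‖f x - g x‖ ^ p) μ)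
    (hnear : ∫ x, ‖f x - g x‖ ^ p ∂μ < (C * ε) ^ p)
    (hg : Integrable (fun x ↦ (‖x‖ * ‖g x‖ * Real.exp ‖x‖) ^ p) μ) :
    ∫ x, (‖(if ‖x‖ < a * Real.log (1 / ε) then f x else 0) - g x‖ * Real.exp ‖x‖) ^ p ∂μ <
      (C ^ p + a⁻¹ ^ p * ∫ x, (‖x‖ * ‖g x‖ * Real.exp ‖x‖) ^ p ∂μ) *
        (Real.log (1 / ε) ^ p)⁻¹ := by
  set L := Real.log (1 / ε)
  set T := ∫ x, (‖x‖ * ‖g x‖ * Real.exp ‖x‖) ^ p ∂μ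
  have hL : 0 < L := Real.log_pos (one_lt_one_div hε0 hε1)
  have hC : 0 ≤ C ^ p := by
    have h : 0 < C ^ p * ε ^ p :=
      mul_pow C ε p ▸ (integral_nonneg fun x ↦ by positivity).trans_lt hnear
    exact (pos_of_mul_pos_left h (by positivity)).le
  calc ∫ x, (‖(if ‖x‖ < a * L then f x else 0) - g x‖ * Real.exp ‖x‖) ^ p ∂μ
      ≤ Real.exp (a * L) ^ p * ∫ x, ‖f x - g x‖ ^ p ∂μ + (a * L)⁻¹ ^ p * T :=
        integral_norm_truncation_sub_mul_pow_le (Real.exp_monotone.monotoneOn _)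
          (Real.exp_nonneg 0) (by positivity) hfg hg
    _ < Real.exp (a * L) ^ p * (C * ε) ^ p + (a * L)⁻¹ ^ p * T := by gcongr
    _ = C ^ p * (Real.exp (a * L) * ε) ^ p + (a * L)⁻¹ ^ p * T := by ring
    _ ≤ C ^ p * L⁻¹ ^ p + (a * L)⁻¹ ^ p * T := by
        gcongr
        exact exp_mul_log_one_div_mul_self_le ha1 hε0 hε1
    _ = (C ^ p + a⁻¹ ^ p * T) * (L ^ p)⁻¹ := by
        rw [mul_inv, mul_pow, ← inv_pow]
        ring

end Truncation

/-- if `0 < ε < e^{-3}`, `‖χ - φ̂‖_{L²} < C₃ ε` and `ζ φ̂(ζ) e^{|ζ|} ∈ L²(ℝ)`,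
then the truncation `χ_log` of `χ` at frequency `(1/6) ln(1/ε)` satisfies
`‖(χ_log - φ̂) e^{|ζ|}‖²_{L²} < (C₃² + 36 ‖ζ φ̂(ζ) e^{|ζ|}‖²_{L²}) (ln(1/ε))^{-2}`. -/
theorem log_truncation_estimate (ε : ℝ) (hε0 : 0 < ε) (hε1 : ε < Real.exp (-3))
    (C₃ : ℝ) (hC₃ : 0 < C₃) (χ φhat : ℝ → ℂ)
    (hχ : MemLp χ 2 (volume : Measure ℝ)) (hφhat : MemLp φhat 2 (volume : Measure ℝ))
    (hnear : Real.sqrt (∫ ζ : ℝ, ‖χ ζ - φhat ζ‖ ^ 2) < C₃ * ε)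
    (hw : MemLp (fun ζ : ℝ => (ζ : ℂ) * φhat ζ * ((Real.exp |ζ| : ℝ) : ℂ)) 2
      (volume : Measure ℝ)) :
    (∫ ζ : ℝ,
        ‖((if |ζ| < (1 / 6) * Real.log (1 / ε) then χ ζ else 0) - φhat ζ) *
            ((Real.exp |ζ| : ℝ) : ℂ)‖ ^ 2) <
      (C₃ ^ 2 + 36 * ∫ ζ : ℝ, ‖(ζ : ℂ) * φhat ζ * ((Real.exp |ζ| : ℝ) : ℂ)‖ ^ 2) *
        ((Real.log (1 / ε)) ^ 2)⁻¹ := by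
  have ha : (1 / 6 : ℝ) ≤ 1 - Real.exp (-1) := by linarith [Real.exp_neg_one_lt_half]
  have hfg := (hχ.sub hφhat).integrable_norm_pow two_ne_zero
  have hg := hw.integrable_norm_pow two_ne_zero
  simp only [norm_mul, Complex.norm_real, Real.norm_eq_abs, Real.abs_exp] at hg ⊢
  have h_inv_sq : (1 / 6 : ℝ)⁻¹ ^ 2 = 36 := by norm_num
  simpa only [h_inv_sq, Real.norm_eq_abs] using log_truncation_estimate_general (by norm_num) ha hε0
    (hε1.trans (by simp)) hfg ((Real.sqrt_lt' (by positivity)).1 hnear) hg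
end

section
/- Let a, b, a', b' : ℝ → ℂ be measurable with (a − a') e^{|ζ|} and (b − b') e^{|ζ|} in L²(ℝ). For ζ ≠ 0 and 0 ≤ y ≤ 1 define ℵ[a,b](ζ, y) = (1/2) a(ζ) [e^{(1−y)|ζ|} + e^{(y−1)|ζ|}] − (1/(2|ζ|)) b(ζ) [e^{(1−y)|ζ|} − e^{(y−1)|ζ|}]. Then ‖ℵ[a,b] − ℵ[a',b']‖_{L²(ℝ × (0,1))} ≤ ‖(a − a') e^{|ζ|}‖_{L²(ℝ)} + ‖(b − b') e^{|ζ|}‖_{L²(ℝ)}. -/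
open MeasureTheory

/-- The Fourier-side solution formula of the Cauchy problem for the Laplace equation on
`ℝ × (0,1)`: `ℵ[a,b](ζ,y) = (1/2) a(ζ) [e^{(1-y)|ζ|} + e^{(y-1)|ζ|}]
 - (1/(2|ζ|)) b(ζ) [e^{(1-y)|ζ|} - e^{(y-1)|ζ|}]`. -/
noncomputable def aleph (a b : ℝ → ℂ) (ζ y : ℝ) : ℂ :=
  (1 / 2 : ℂ) * a ζ * ((Real.exp ((1 - y) * |ζ|) + Real.exp ((y - 1) * |ζ|) : ℝ) : ℂ) -
    ((1 / (2 * |ζ|) : ℝ) : ℂ) * b ζ *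
      ((Real.exp ((1 - y) * |ζ|) - Real.exp ((y - 1) * |ζ|) : ℝ) : ℂ)

/-!
Since `aleph` is linear in the data, only the size of `aleph a b` has to be estimated. Its two
Fourier multipliers are `cosh ((1 - y)|ζ|)` and `sinh ((1 - y)|ζ|) / |ζ|`, and both are at most
`exp |ζ|` for `0 ≤ y ≤ 1`, the second because `sinh t ≤ t exp t`. The resulting pointwise bound
does not depend on `y`, so averaging over `y` costs nothing and Minkowski's inequality finishes
the proof.
-/

open Function
open scoped ENNReal

/-- The data `a` weighted by `e^{|ζ|}`; its `L²` norm is the one in which the Cauchy data are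
measured. -/
noncomputable def expWeighted (a : ℝ → ℂ) (ζ : ℝ) : ℂ :=
  a ζ * ((Real.exp |ζ| : ℝ) : ℂ)

section Multipliers

lemma cosh_le_exp {t : ℝ} (ht : 0 ≤ t) : Real.cosh t ≤ Real.exp t := by
  rw [← Real.cosh_add_sinh]
  exact le_add_of_nonneg_right (Real.sinh_nonneg_iff.2 ht)

lemma sinh_le_mul_exp (t : ℝ) : Real.sinh t ≤ t * Real.exp t := by
  have exp_neg_eq : Real.exp (-t) = Real.exp t * Real.exp (-(2 * t)) := by
    rw [← Real.exp_add]
    ring_nf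
  calc
    Real.sinh t = Real.exp t * (1 - Real.exp (-(2 * t))) / 2 := by
      rw [Real.sinh_eq, exp_neg_eq]
      ring
    _ ≤ Real.exp t * (2 * t) / 2 := by
      gcongr
      linarith [Real.one_sub_le_exp_neg (2 * t)]
    _ = t * Real.exp t := by ring

lemma sinh_div_le_exp {t r : ℝ} (ht : 0 ≤ t) (htr : t ≤ r) : Real.sinh t / r ≤ Real.exp r := by
  have hr : 0 ≤ r := ht.trans htr
  refine div_le_of_le_mul₀ hr (Real.exp_nonneg r) ?_
  calc
    Real.sinh t ≤ t * Real.exp t := sinh_le_mul_exp t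
    _ ≤ r * Real.exp r := by gcongr
    _ = Real.exp r * r := mul_comm _ _

end Multipliers

section Pointwise

variable (a b a' b' : ℝ → ℂ) (ζ : ℝ)

lemma aleph_eq_cosh_sub_sinh (y : ℝ) :
    aleph a b ζ y = a ζ * ((Real.cosh ((1 - y) * |ζ|) : ℝ) : ℂ) -
      b ζ * ((Real.sinh ((1 - y) * |ζ|) / |ζ| : ℝ) : ℂ) := by
  have exponent_eq : (y - 1) * |ζ| = -((1 - y) * |ζ|) := by ring
  rw [aleph, exponent_eq, Real.cosh_eq, Real.sinh_eq]
  push_cast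
  ring

lemma aleph_sub_aleph (y : ℝ) :
    aleph a b ζ y - aleph a' b' ζ y = aleph (a - a') (b - b') ζ y := by
  simp only [aleph, Pi.sub_apply]
  ring

lemma norm_aleph_le {y : ℝ} (hy : y ∈ Set.Icc (0 : ℝ) 1) :
    ‖aleph a b ζ y‖ ≤ ‖expWeighted a ζ‖ + ‖expWeighted b ζ‖ := by
  have ht : 0 ≤ (1 - y) * |ζ| := mul_nonneg (sub_nonneg.2 hy.2) (abs_nonneg ζ)
  have htζ : (1 - y) * |ζ| ≤ |ζ| :=
    mul_le_of_le_one_left (abs_nonneg ζ) (sub_le_self 1 hy.1)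
  have cosh_le : Real.cosh ((1 - y) * |ζ|) ≤ Real.exp |ζ| :=
    (cosh_le_exp ht).trans (Real.exp_le_exp.2 htζ)
  have sinh_div_nonneg : 0 ≤ Real.sinh ((1 - y) * |ζ|) / |ζ| :=
    div_nonneg (Real.sinh_nonneg_iff.2 ht) (abs_nonneg ζ)
  rw [aleph_eq_cosh_sub_sinh]
  refine (norm_sub_le _ _).trans ?_
  simp only [expWeighted, norm_mul, Complex.norm_of_nonneg (Real.cosh_pos _).le,
    Complex.norm_of_nonneg sinh_div_nonneg, Complex.norm_of_nonneg (Real.exp_nonneg _)]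
  gcongr
  exact sinh_div_le_exp ht htζ

end Pointwise

section Norms

variable {X Y E : Type*} [MeasurableSpace X] [MeasurableSpace Y] [NormedAddCommGroup E]
  {μ : Measure X} {ν : Measure Y}

lemma sqrt_integral_norm_sq_eq_toReal_eLpNorm {f : X → E} (hf : AEStronglyMeasurable f μ) :
    √(∫ x, ‖f x‖ ^ 2 ∂μ) = (eLpNorm f 2 μ).toReal := by
  rw [toReal_eLpNorm hf, lpNorm_eq_integral_norm_rpow_toReal two_ne_zero ENNReal.ofNat_ne_top hf,
    Real.sqrt_eq_rpow]
  simp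

lemma sqrt_integral_integral_norm_sq_eq_toReal_eLpNorm [SFinite μ] [SFinite ν] {f : X → Y → E}
    (hf : MemLp (uncurry f) 2 (μ.prod ν)) :
    √(∫ x, ∫ y, ‖f x y‖ ^ 2 ∂ν ∂μ) = (eLpNorm (uncurry f) 2 (μ.prod ν)).toReal := by
  rw [← sqrt_integral_norm_sq_eq_toReal_eLpNorm hf.aestronglyMeasurable,
    integral_prod _ (hf.integrable_norm_pow two_ne_zero)]
  rfl

lemma eLpNorm_uncurry_le_of_norm_le [IsProbabilityMeasure ν] {p : ℝ≥0∞} {f : X → Y → E}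
    {g : X → ℝ} (hg : AEStronglyMeasurable g μ) (hfg : ∀ᵐ y ∂ν, ∀ x, ‖f x y‖ ≤ g x) :
    eLpNorm (uncurry f) p (μ.prod ν) ≤ eLpNorm g p μ := by
  rw [← eLpNorm_comp_measurePreserving hg (measurePreserving_fst (ν := ν))]
  refine eLpNorm_mono_ae_real ?_
  filter_upwards [Measure.quasiMeasurePreserving_snd.ae hfg] with z hz
  exact hz z.1

end Norms

section Estimate

variable {a b a' b' : ℝ → ℂ} {p : ℝ≥0∞} {μ ν : Measure ℝ}

lemma aestronglyMeasurable_of_expWeighted (ha : AEStronglyMeasurable (expWeighted a) μ) :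
    AEStronglyMeasurable a μ := by
  have unweight : a = fun ζ ↦ expWeighted a ζ * ((Real.exp (-|ζ|) : ℝ) : ℂ) := by
    funext ζ
    rw [expWeighted, mul_assoc, ← Complex.ofReal_mul, ← Real.exp_add, add_neg_cancel,
      Real.exp_zero, Complex.ofReal_one, mul_one]
  rw [unweight]
  exact ha.mul (by fun_prop)

lemma aestronglyMeasurable_uncurry_aleph (ha : AEStronglyMeasurable a μ)
    (hb : AEStronglyMeasurable b μ) :
    AEStronglyMeasurable (uncurry (aleph a b)) (μ.prod ν) := by
  have uncurry_eq : uncurry (aleph a b) = fun z : ℝ × ℝ ↦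
      a z.1 * ((Real.cosh ((1 - z.2) * |z.1|) : ℝ) : ℂ) -
        b z.1 * ((Real.sinh ((1 - z.2) * |z.1|) / |z.1| : ℝ) : ℂ) :=
    funext fun z ↦ aleph_eq_cosh_sub_sinh a b z.1 z.2
  rw [uncurry_eq]
  refine (ha.comp_fst.mul ?_).sub (hb.comp_fst.mul ?_) <;>
    exact Measurable.aestronglyMeasurable (by fun_prop)

lemma eLpNorm_uncurry_aleph_le [IsProbabilityMeasure ν] (hp : 1 ≤ p)
    (ha : AEStronglyMeasurable (expWeighted a) μ) (hb : AEStronglyMeasurable (expWeighted b) μ)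
    (hν : ∀ᵐ y ∂ν, y ∈ Set.Icc (0 : ℝ) 1) :
    eLpNorm (uncurry (aleph a b)) p (μ.prod ν) ≤
      eLpNorm (expWeighted a) p μ + eLpNorm (expWeighted b) p μ := by
  calc
    eLpNorm (uncurry (aleph a b)) p (μ.prod ν)
        ≤ eLpNorm (fun ζ ↦ ‖expWeighted a ζ‖ + ‖expWeighted b ζ‖) p μ :=
      eLpNorm_uncurry_le_of_norm_le (ha.norm.add hb.norm)
        (hν.mono fun _ hy ζ ↦ norm_aleph_le a b ζ hy)
    _ ≤ eLpNorm (fun ζ ↦ ‖expWeighted a ζ‖) p μ + eLpNorm (fun ζ ↦ ‖expWeighted b ζ‖) p μ :=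
      eLpNorm_add_le ha.norm hb.norm hp
    _ = eLpNorm (expWeighted a) p μ + eLpNorm (expWeighted b) p μ := by
      rw [eLpNorm_norm, eLpNorm_norm]

lemma memLp_uncurry_aleph [IsProbabilityMeasure ν] (hp : 1 ≤ p)
    (ha : MemLp (expWeighted a) p μ) (hb : MemLp (expWeighted b) p μ)
    (hν : ∀ᵐ y ∂ν, y ∈ Set.Icc (0 : ℝ) 1) :
    MemLp (uncurry (aleph a b)) p (μ.prod ν) :=
  ⟨aestronglyMeasurable_uncurry_aleph (aestronglyMeasurable_of_expWeighted ha.1)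
      (aestronglyMeasurable_of_expWeighted hb.1),
    (eLpNorm_uncurry_aleph_le hp ha.1 hb.1 hν).trans_lt (ENNReal.add_lt_top.2 ⟨ha.2, hb.2⟩)⟩

-- A Dirac mass `ν` gives the estimate at a single height `y`.
theorem aleph_stability_general [SFinite μ] [IsProbabilityMeasure ν]
    (ha : MemLp (expWeighted (a - a')) 2 μ) (hb : MemLp (expWeighted (b - b')) 2 μ)
    (hν : ∀ᵐ y ∂ν, y ∈ Set.Icc (0 : ℝ) 1) :
    √(∫ ζ, ∫ y, ‖aleph a b ζ y - aleph a' b' ζ y‖ ^ 2 ∂ν ∂μ) ≤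
      √(∫ ζ, ‖expWeighted (a - a') ζ‖ ^ 2 ∂μ) + √(∫ ζ, ‖expWeighted (b - b') ζ‖ ^ 2 ∂μ) := by
  simp only [aleph_sub_aleph]
  rw [sqrt_integral_integral_norm_sq_eq_toReal_eLpNorm
      (memLp_uncurry_aleph one_le_two ha hb hν),
    sqrt_integral_norm_sq_eq_toReal_eLpNorm ha.1, sqrt_integral_norm_sq_eq_toReal_eLpNorm hb.1,
    ← ENNReal.toReal_add ha.eLpNorm_ne_top hb.eLpNorm_ne_top]
  exact ENNReal.toReal_mono (ENNReal.add_ne_top.2 ⟨ha.eLpNorm_ne_top, hb.eLpNorm_ne_top⟩)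
    (eLpNorm_uncurry_aleph_le one_le_two ha.1 hb.1 hν)

end Estimate

/-- stability of the Fourier-side solution formula:
`‖ℵ[a,b] - ℵ[a',b']‖_{L²(ℝ×(0,1))} ≤ ‖(a-a') e^{|ζ|}‖_{L²} + ‖(b-b') e^{|ζ|}‖_{L²}`. -/
theorem aleph_stability (a b a' b' : ℝ → ℂ)
    (ha : Measurable a) (hb : Measurable b) (ha' : Measurable a') (hb' : Measurable b')
    (hae : MemLp (fun ζ : ℝ => (a ζ - a' ζ) * ((Real.exp |ζ| : ℝ) : ℂ)) 2
      (volume : Measure ℝ))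
    (hbe : MemLp (fun ζ : ℝ => (b ζ - b' ζ) * ((Real.exp |ζ| : ℝ) : ℂ)) 2
      (volume : Measure ℝ)) :
    Real.sqrt (∫ ζ : ℝ, ∫ y in Set.Ioo (0 : ℝ) 1,
        ‖aleph a b ζ y - aleph a' b' ζ y‖ ^ 2) ≤
      Real.sqrt (∫ ζ : ℝ, ‖(a ζ - a' ζ) * ((Real.exp |ζ| : ℝ) : ℂ)‖ ^ 2) +
        Real.sqrt (∫ ζ : ℝ, ‖(b ζ - b' ζ) * ((Real.exp |ζ| : ℝ) : ℂ)‖ ^ 2) := by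
  have : IsProbabilityMeasure (volume.restrict (Set.Ioo (0 : ℝ) 1)) := ⟨by simp⟩
  exact aleph_stability_general hae hbe
    (ae_restrict_of_forall_mem measurableSet_Ioo fun _ hy ↦ Set.Ioo_subset_Icc_self hy)
end

section
/- Let f : ℝ × (1,∞) × ℝ → ℝ and p ∈ L¹(ℝ × (1,∞)) be measurable with |f(ξ,η,a) − f(ξ,η,b)| ≤ |p(ξ,η)| |a − b| for all ξ ∈ ℝ, η > 1, a, b ∈ ℝ, and suppose L := ( ∫_ℝ [ ∫_1^∞ ∫_ℝ ((η−1)/((x−ξ)² + (1−η)²)) |p(ξ,η)| dξ dη ]² dx )^{1/2} < ∞. For bounded measurable u : ℝ × (1,∞) → ℝ define k_y(x) = (1/π) ∫_1^∞ ∫_ℝ ((1−η)/((x−ξ)² + (1−η)²)) f(ξ,η,u(ξ,η)) dξ dη, and similarly k_y^ε using another bounded measurable u_ε in place of u. Then ‖k_y^ε − k_y‖_{L²(ℝ)} ≤ (L/π) · sup_{(ξ,η) ∈ ℝ × (1,∞)} |u(ξ,η) − u_ε(ξ,η)|. -/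
open MeasureTheory

/-!
Write `g = f(·, u)`, `gε = f(·, uε)`, so that `|gε - g| ≤ S |p|` on the half-plane. For almost
every `x` the double integrals are absolutely convergent and the triangle inequality gives
`|k_y^ε x - k_y x| ≤ (S/π) ∬ |K(x, q)| |p q| dq`; taking `L²` norms in `x` finishes the proof. The
absolute convergence of the majorant is what `p ∈ L¹` is for: for fixed `q` the kernel `|K(·, q)|`
is `π` times a Cauchy density, so Tonelli makes `K(x, q) p(q)` integrable in `(x, q)` jointly.
-/

section Integral

variable {X Y : Type*} [MeasurableSpace X] [MeasurableSpace Y] {μ : Measure X} {ν : Measure Y}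

lemma setIntegral_univ_prod_symm {E : Type*} [NormedAddCommGroup E] [NormedSpace ℝ E]
    [SFinite μ] [SFinite ν] {F : X × Y → E} {t : Set Y}
    (hF : IntegrableOn F (Set.univ ×ˢ t) (μ.prod ν)) :
    ∫ z in Set.univ ×ˢ t, F z ∂μ.prod ν = ∫ y in t, ∫ x, F (x, y) ∂μ ∂ν := by
  rw [IntegrableOn, ← Measure.prod_restrict, Measure.restrict_univ] at hF
  rw [← Measure.prod_restrict, Measure.restrict_univ, integral_prod_symm F hF]

lemma integrable_prod_smul_of_integral_norm_le {𝕜 E : Type*} [NormedField 𝕜]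
    [NormedAddCommGroup E] [NormedSpace 𝕜 E] [SFinite μ] [SFinite ν]
    {K : X × Y → 𝕜} {h : Y → E} {C : ℝ} (hK : AEStronglyMeasurable K (μ.prod ν))
    (hKint : ∀ᵐ y ∂ν, Integrable (fun x => K (x, y)) μ)
    (hKC : ∀ᵐ y ∂ν, ∫ x, ‖K (x, y)‖ ∂μ ≤ C) (hh : Integrable h ν) :
    Integrable (fun z : X × Y => K z • h z.2) (μ.prod ν) := by
  have hmeas : AEStronglyMeasurable (fun z : X × Y => K z • h z.2) (μ.prod ν) :=
    hK.smul hh.aestronglyMeasurable.comp_snd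
  refine (integrable_prod_iff' hmeas).2 ⟨?_, ?_⟩
  · filter_upwards [hKint] with y hy using hy.smul_const (h y)
  · refine (hh.norm.const_mul C).mono' hmeas.norm.prod_swap.integral_prod_right' ?_
    filter_upwards [hKC] with y hy
    rw [Real.norm_of_nonneg (integral_nonneg fun x => norm_nonneg _)]
    simp only [norm_smul, integral_mul_const]
    gcongr

lemma abs_integral_mul_sub_integral_mul_le {K g₁ g₂ h : Y → ℝ} {S : ℝ}
    (h₁ : Integrable (fun y => K y * g₁ y) ν) (h₂ : Integrable (fun y => K y * g₂ y) ν)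
    (hKh : Integrable (fun y => |K y| * h y) ν) (hg : ∀ᵐ y ∂ν, |g₁ y - g₂ y| ≤ S * h y) :
    |(∫ y, K y * g₁ y ∂ν) - ∫ y, K y * g₂ y ∂ν| ≤ S * ∫ y, |K y| * h y ∂ν := by
  rw [← integral_sub h₁ h₂, ← integral_const_mul, ← Real.norm_eq_abs]
  refine norm_integral_le_of_norm_le (hKh.const_mul S) ?_
  filter_upwards [hg] with y hy
  calc ‖K y * g₁ y - K y * g₂ y‖ = |K y| * |g₁ y - g₂ y| := by
        rw [← mul_sub, Real.norm_eq_abs, abs_mul]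
    _ ≤ |K y| * (S * h y) := by gcongr
    _ = S * (|K y| * h y) := by ring

lemma sqrt_integral_sq_le_mul_sqrt_integral_sq {F G : X → ℝ} {c : ℝ} (hc : 0 ≤ c)
    (hG : Integrable (fun x => G x ^ 2) μ) (hFG : ∀ᵐ x ∂μ, |F x| ≤ c * G x) :
    √(∫ x, F x ^ 2 ∂μ) ≤ c * √(∫ x, G x ^ 2 ∂μ) := by
  rw [← Real.sqrt_sq hc, ← Real.sqrt_mul (sq_nonneg c), ← integral_const_mul]
  refine Real.sqrt_le_sqrt (integral_mono_of_nonneg (.of_forall fun x => sq_nonneg (F x))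
    (hG.const_mul _) ?_)
  filter_upwards [hFG] with x hx
  calc F x ^ 2 = |F x| ^ 2 := (sq_abs _).symm
    _ ≤ (c * G x) ^ 2 := by gcongr
    _ = c ^ 2 * G x ^ 2 := mul_pow _ _ _

end Integral

/-- The kernel `π ∂_y(-N)(x, 1, ξ, η)` of the normal derivative of the volume potential on the
boundary line `y = 1`, with the source point `(ξ, η)` encoded as a pair. -/
noncomputable def normalDerivKernel (x : ℝ) (q : ℝ × ℝ) : ℝ :=
  (1 - q.2) / ((x - q.1) ^ 2 + (1 - q.2) ^ 2)

/-- The normal derivative `k_y(x)` on the line `y = 1` of the volume potential of the source density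
`g` on the half-plane `η > 1`, as an iterated integral with `ξ` innermost. -/
noncomputable def potentialNormalDeriv (g : ℝ → ℝ → ℝ) (x : ℝ) : ℝ :=
  (1 / Real.pi) * ∫ η in Set.Ioi (1 : ℝ), ∫ ξ : ℝ, normalDerivKernel x (ξ, η) * g ξ η

/-- The function of `x` whose `L²` norm is the constant `L` of the paper. The factor
`(η - 1) / ((x - ξ) ^ 2 + (1 - η) ^ 2)` is `|normalDerivKernel x (ξ, η)|` on the half-plane. -/
noncomputable def normalDerivMajorant (p : ℝ → ℝ → ℝ) (x : ℝ) : ℝ :=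
  ∫ η in Set.Ioi (1 : ℝ), ∫ ξ : ℝ, ((η - 1) / ((x - ξ) ^ 2 + (1 - η) ^ 2)) * |p ξ η|

lemma measurable_normalDerivKernel :
    Measurable fun z : ℝ × ℝ × ℝ => normalDerivKernel z.1 z.2 := by
  unfold normalDerivKernel
  fun_prop

lemma abs_normalDerivKernel_of_one_le (x : ℝ) {q : ℝ × ℝ} (hq : 1 ≤ q.2) :
    |normalDerivKernel x q| = (q.2 - 1) / ((x - q.1) ^ 2 + (1 - q.2) ^ 2) := by
  rw [normalDerivKernel, abs_div, abs_sub_comm, abs_of_nonneg (sub_nonneg.2 hq),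
    abs_of_nonneg (by positivity)]

lemma abs_normalDerivKernel_eq_pi_mul_cauchyPDFReal (x : ℝ) (q : ℝ × ℝ) :
    |normalDerivKernel x q| =
      Real.pi * ProbabilityTheory.cauchyPDFReal q.1 ‖1 - q.2‖₊ x := by
  rw [normalDerivKernel, abs_div, ProbabilityTheory.cauchyPDFReal_def, coe_nnnorm,
    Real.norm_eq_abs, sq_abs, abs_of_nonneg (by positivity : 0 ≤ (x - q.1) ^ 2 + (1 - q.2) ^ 2),
    mul_assoc, mul_inv_cancel_left₀ Real.pi_ne_zero, div_eq_mul_inv]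

lemma integrable_abs_normalDerivKernel (q : ℝ × ℝ) :
    Integrable fun x => |normalDerivKernel x q| := by
  simp only [abs_normalDerivKernel_eq_pi_mul_cauchyPDFReal]
  exact (ProbabilityTheory.integrable_cauchyPDFReal _).const_mul _

lemma integral_abs_normalDerivKernel_le_pi (q : ℝ × ℝ) :
    ∫ x, |normalDerivKernel x q| ≤ Real.pi := by
  simp only [abs_normalDerivKernel_eq_pi_mul_cauchyPDFReal, integral_const_mul]
  rcases eq_or_ne ‖1 - q.2‖₊ 0 with hγ | hγ
  · simp [hγ, Real.pi_pos.le]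
  · rw [ProbabilityTheory.integral_cauchyPDFReal_eq_one _ hγ, mul_one]

lemma ae_integrable_abs_normalDerivKernel_mul {ν : Measure (ℝ × ℝ)} [SFinite ν] {h : ℝ × ℝ → ℝ}
    (hh : Integrable h ν) :
    ∀ᵐ x : ℝ, Integrable (fun q => |normalDerivKernel x q| * h q) ν := by
  refine (integrable_prod_smul_of_integral_norm_le (C := Real.pi) (μ := volume)
    (K := fun z : ℝ × ℝ × ℝ => |normalDerivKernel z.1 z.2|)
    measurable_normalDerivKernel.abs.aestronglyMeasurable
    (.of_forall integrable_abs_normalDerivKernel) (.of_forall fun q => ?_) hh).prod_right_ae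
  simpa only [Real.norm_eq_abs, abs_abs] using integral_abs_normalDerivKernel_le_pi q

lemma potentialNormalDeriv_eq_setIntegral {g : ℝ → ℝ → ℝ} {x : ℝ}
    (hg : IntegrableOn (fun q => normalDerivKernel x q * g q.1 q.2) (Set.univ ×ˢ Set.Ioi 1)) :
    potentialNormalDeriv g x = (1 / Real.pi) *
      ∫ q in Set.univ ×ˢ Set.Ioi 1, normalDerivKernel x q * g q.1 q.2 := by
  rw [potentialNormalDeriv, Measure.volume_eq_prod, setIntegral_univ_prod_symm hg]

lemma normalDerivMajorant_eq_setIntegral {p : ℝ → ℝ → ℝ} {x : ℝ}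
    (hp : IntegrableOn (fun q => |normalDerivKernel x q| * |p q.1 q.2|)
      (Set.univ ×ˢ Set.Ioi 1)) :
    normalDerivMajorant p x =
      ∫ q in Set.univ ×ˢ Set.Ioi 1, |normalDerivKernel x q| * |p q.1 q.2| := by
  rw [Measure.volume_eq_prod, setIntegral_univ_prod_symm hp]
  refine setIntegral_congr_fun measurableSet_Ioi fun η hη => ?_
  simp only [abs_normalDerivKernel_of_one_le _ (q := (_, η)) (le_of_lt hη)]

lemma ae_abs_potentialNormalDeriv_sub_le {g₁ g₂ p : ℝ → ℝ → ℝ} {S : ℝ}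
    (hp : IntegrableOn (fun q : ℝ × ℝ => p q.1 q.2) (Set.univ ×ˢ Set.Ioi 1))
    (h₁ : ∀ᵐ x : ℝ, IntegrableOn (fun q => normalDerivKernel x q * g₁ q.1 q.2)
      (Set.univ ×ˢ Set.Ioi 1))
    (h₂ : ∀ᵐ x : ℝ, IntegrableOn (fun q => normalDerivKernel x q * g₂ q.1 q.2)
      (Set.univ ×ˢ Set.Ioi 1))
    (hg : ∀ ξ η : ℝ, 1 < η → |g₁ ξ η - g₂ ξ η| ≤ S * |p ξ η|) :
    ∀ᵐ x : ℝ, |potentialNormalDeriv g₁ x - potentialNormalDeriv g₂ x| ≤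
      S / Real.pi * normalDerivMajorant p x := by
  filter_upwards [h₁, h₂, ae_integrable_abs_normalDerivKernel_mul hp.abs] with x hx₁ hx₂ hxp
  have hg_ae : ∀ᵐ q : ℝ × ℝ ∂volume.restrict (Set.univ ×ˢ Set.Ioi 1),
      |g₁ q.1 q.2 - g₂ q.1 q.2| ≤ S * |p q.1 q.2| := by
    filter_upwards [ae_restrict_mem (MeasurableSet.univ.prod measurableSet_Ioi)] with q hq
      using hg q.1 q.2 hq.2
  have hle := abs_integral_mul_sub_integral_mul_le hx₁ hx₂ hxp hg_ae
  rw [potentialNormalDeriv_eq_setIntegral hx₁, potentialNormalDeriv_eq_setIntegral hx₂,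
    normalDerivMajorant_eq_setIntegral hxp, ← mul_sub, abs_mul,
    abs_of_pos (one_div_pos.2 Real.pi_pos), one_div_mul_eq_div, div_mul_eq_mul_div]
  gcongr

theorem volume_potential_derivative_estimate_general {E : Type*} [PseudoMetricSpace E]
    (f : ℝ → ℝ → E → ℝ) (p : ℝ → ℝ → ℝ)
    (hp : IntegrableOn (fun q : ℝ × ℝ => p q.1 q.2) (Set.univ ×ˢ Set.Ioi 1))
    (hlip : ∀ (ξ η : ℝ) (a b : E), 1 < η → |f ξ η a - f ξ η b| ≤ |p ξ η| * dist a b)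
    (hL : Integrable fun x => normalDerivMajorant p x ^ 2) (u uε : ℝ → ℝ → E)
    (hint : ∀ᵐ x : ℝ, IntegrableOn
      (fun q => normalDerivKernel x q * f q.1 q.2 (u q.1 q.2)) (Set.univ ×ˢ Set.Ioi 1))
    (hintε : ∀ᵐ x : ℝ, IntegrableOn
      (fun q => normalDerivKernel x q * f q.1 q.2 (uε q.1 q.2)) (Set.univ ×ˢ Set.Ioi 1))
    (S : ℝ) (hS : ∀ ξ η : ℝ, 1 < η → dist (u ξ η) (uε ξ η) ≤ S) :
    √(∫ x, (potentialNormalDeriv (fun ξ η => f ξ η (uε ξ η)) x -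
        potentialNormalDeriv (fun ξ η => f ξ η (u ξ η)) x) ^ 2) ≤
      √(∫ x, normalDerivMajorant p x ^ 2) / Real.pi * S := by
  have hS_nonneg : 0 ≤ S := dist_nonneg.trans (hS 0 2 one_lt_two)
  have hsource (ξ η : ℝ) (hη : 1 < η) :
      |f ξ η (uε ξ η) - f ξ η (u ξ η)| ≤ S * |p ξ η| :=
    calc |f ξ η (uε ξ η) - f ξ η (u ξ η)| ≤ |p ξ η| * dist (u ξ η) (uε ξ η) :=
          dist_comm (u ξ η) (uε ξ η) ▸ hlip ξ η _ _ hη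
      _ ≤ |p ξ η| * S := by gcongr; exact hS ξ η hη
      _ = S * |p ξ η| := mul_comm _ _
  rw [div_mul_eq_mul_div, mul_comm, ← div_mul_eq_mul_div]
  exact sqrt_integral_sq_le_mul_sqrt_integral_sq (by positivity) hL
    (ae_abs_potentialNormalDeriv_sub_le hp hintε hint hsource)

/-- estimate (44) in the proof of Lemma 1 of the paper: with the Lipschitz
bound `|f(ξ,η,a) - f(ξ,η,b)| ≤ |p(ξ,η)||a-b|` and
`L = (∫ (∫_1^∞ ∫ ((η-1)/((x-ξ)² + (1-η)²)) |p(ξ,η)| dξ dη)² dx)^{1/2} < ∞`, the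
derivatives `k_y, k_y^ε` of the volume potentials built from `u` and `u_ε` satisfy
`‖k_y^ε - k_y‖_{L²(ℝ)} ≤ (L/π) sup |u - u_ε|`. -/
theorem volume_potential_derivative_estimate
    (f : ℝ → ℝ → ℝ → ℝ) (p : ℝ → ℝ → ℝ)
    (hf : Measurable fun q : ℝ × ℝ × ℝ => f q.1 q.2.1 q.2.2)
    (hp : IntegrableOn (fun q : ℝ × ℝ => p q.1 q.2) (Set.univ ×ˢ Set.Ioi 1))
    (hlip : ∀ ξ η a b : ℝ, 1 < η → |f ξ η a - f ξ η b| ≤ |p ξ η| * |a - b|)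
    (hL : Integrable (fun x : ℝ =>
      (∫ η in Set.Ioi (1 : ℝ), ∫ ξ : ℝ,
          ((η - 1) / ((x - ξ) ^ 2 + (1 - η) ^ 2)) * |p ξ η|) ^ 2))
    (u uε : ℝ → ℝ → ℝ)
    (hu : Measurable fun q : ℝ × ℝ => u q.1 q.2)
    (huε : Measurable fun q : ℝ × ℝ => uε q.1 q.2)
    (hub : ∃ C, ∀ ξ η : ℝ, |u ξ η| ≤ C)
    (huεb : ∃ C, ∀ ξ η : ℝ, |uε ξ η| ≤ C)
    (hint : ∀ x : ℝ, IntegrableOn (fun q : ℝ × ℝ =>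
        ((1 - q.2) / ((x - q.1) ^ 2 + (1 - q.2) ^ 2)) * f q.1 q.2 (u q.1 q.2))
      (Set.univ ×ˢ Set.Ioi 1))
    (hintε : ∀ x : ℝ, IntegrableOn (fun q : ℝ × ℝ =>
        ((1 - q.2) / ((x - q.1) ^ 2 + (1 - q.2) ^ 2)) * f q.1 q.2 (uε q.1 q.2))
      (Set.univ ×ˢ Set.Ioi 1))
    (S : ℝ) (hS : ∀ ξ η : ℝ, 1 < η → |u ξ η - uε ξ η| ≤ S) :
    Real.sqrt (∫ x : ℝ,
        ((1 / Real.pi) * (∫ η in Set.Ioi (1 : ℝ), ∫ ξ : ℝ,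
            ((1 - η) / ((x - ξ) ^ 2 + (1 - η) ^ 2)) * f ξ η (uε ξ η)) -
          (1 / Real.pi) * (∫ η in Set.Ioi (1 : ℝ), ∫ ξ : ℝ,
            ((1 - η) / ((x - ξ) ^ 2 + (1 - η) ^ 2)) * f ξ η (u ξ η))) ^ 2) ≤
      (Real.sqrt (∫ x : ℝ,
          (∫ η in Set.Ioi (1 : ℝ), ∫ ξ : ℝ,
              ((η - 1) / ((x - ξ) ^ 2 + (1 - η) ^ 2)) * |p ξ η|) ^ 2) / Real.pi) * S := by
  exact volume_potential_derivative_estimate_general f p hp hlip hL u uε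
    (.of_forall hint) (.of_forall hintε) S hS
end
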